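/- arXiv:1405.6650 — 2 statements merged into one kernel-verified Lean document; each statement's English description precedes it below -/
import Mathlib

section
/- Let E_1,…,E_m be n×n complex matrices with Σ_{i=1}^m E_i† E_i = I, let E†(ρ) = Σ_{i=1}^m E_i ρ E_i† be the associated Kraus map with adjoint E(X) = Σ_{i=1}^m E_i† X E_i, and suppose E† is positivity improving. Then there exist n×n Hermitian positive definite matrices φ_0 and φ_T such that E(φ_T) = φ_0 and E†(φ_0^{-1}) = φ_T^{-1}; moreover the pair (φ_0, φ_T) is unique up to multiplication of both matrices by a common positive constant. -/
open Matrix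
open scoped ComplexOrder

/-!
Pairs `(φ_0, φ_T)` solving the system correspond to positive definite fixed points `φ_T` of the
map `X ↦ (E†(E(X)⁻¹))⁻¹`, which is homogeneous of degree one. It is also strongly monotone: `X < Y`
forces the difference of the images to be positive definite, because `E` and `E†` are positivity
improving and inversion is strictly antitone. A nonlinear Perron–Frobenius argument then applies.
A compactness argument gives the least `t` such that `F X ≤ t X` for some nonzero `X ≥ 0`; strong
monotonicity forces `F X = t X` there, since otherwise `F X` would satisfy the inequality with a
smaller constant. The same mechanism, applied to the least `c` with `Y ≤ c X`, shows that fixed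
points are unique up to scaling. Finally, pairing the eigenvalue equation with `X` under the trace
gives `t = 1`.
-/

namespace QuantumSinkhorn

open Set
open scoped MatrixOrder

variable {𝕜 ι n p q : Type*} [RCLike 𝕜] [Fintype ι] [Finite n] [Fintype p] [Fintype q]

section LoewnerOrder

variable {A B X Y : Matrix n n 𝕜}

lemma isClosed_setOf_posSemidef : IsClosed {A : Matrix n n 𝕜 | A.PosSemidef} := by
  cases nonempty_fintype n
  simp only [posSemidef_iff_dotProduct_mulVec, ofPred_and, ofPred_forall]
  exact (isClosed_eq (by fun_prop) continuous_id).inter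
    (isClosed_iInter fun x => isClosed_le continuous_const (by fun_prop))

instance : OrderClosedTopology (Matrix n n 𝕜) where
  isClosed_le' := isClosed_setOf_posSemidef.preimage (continuous_snd.sub continuous_fst)

instance : IsOrderedModule ℝ (Matrix n n 𝕜) := by
  cases nonempty_fintype n
  infer_instance

omit [Finite n] in
lemma posDef_of_posDef_of_le (hA : A.PosDef) (hAB : A ≤ B) : B.PosDef := by
  simpa only [add_sub_cancel] using hA.add_posSemidef (le_iff.1 hAB)

omit [Finite n] in
lemma pos_of_posDef [Nonempty n] (hA : A.PosDef) : 0 < A := by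
  refine hA.posSemidef.nonneg.lt_of_ne' ?_
  rintro rfl
  exact (hA.diag_pos (i := Classical.arbitrary n)).ne' rfl

lemma pos_of_smul_pos_of_pos {t : ℝ} (hX : 0 < X) (h : 0 < t • X) : 0 < t := by
  by_contra! ht
  exact h.not_ge (smul_nonpos_of_nonpos_of_nonneg ht hX.le)

lemma exists_isCompact_base_Ioi : ∃ K : Set (Matrix n n 𝕜), IsCompact K ∧ K ⊆ Ioi 0 ∧
    ∀ X, 0 < X → ∃ c : ℝ, 0 < c ∧ c • X ∈ K := by
  cases nonempty_fintype n
  have hclosed : IsClosed (Ici (0 : Matrix n n 𝕜)) := isClosed_Ici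
  let : NormedAddCommGroup (Matrix n n 𝕜) := Matrix.normedAddCommGroup
  let : NormedSpace ℝ (Matrix n n 𝕜) := Matrix.normedSpace
  have : ProperSpace (Matrix n n 𝕜) := FiniteDimensional.proper_real _
  refine ⟨Ici 0 ∩ Metric.sphere 0 1, (isCompact_sphere 0 1).inter_left hclosed, ?_, ?_⟩
  · rintro X ⟨hX, hnorm⟩
    exact lt_of_le_of_ne' hX (ne_zero_of_mem_unit_sphere ⟨X, hnorm⟩)
  · intro X hX
    have hc : 0 < ‖X‖⁻¹ := inv_pos.2 (norm_pos_iff.2 hX.ne')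
    exact ⟨‖X‖⁻¹, hc, smul_nonneg hc.le hX.le, by simp [norm_smul, hX.ne']⟩

lemma exists_pos_smul_one_le [DecidableEq n] (hA : A.PosDef) :
    ∃ r : ℝ, 0 < r ∧ r • (1 : Matrix n n 𝕜) ≤ A := by
  cases nonempty_fintype n
  cases isEmpty_or_nonempty n
  · exact ⟨1, one_pos, (Subsingleton.elim _ _).le⟩
  simp only [← Algebra.algebraMap_eq_smul_one]
  exact (CFC.exists_pos_algebraMap_le_iff hA.isHermitian).2 fun _ =>
    (isStrictlyPositive_iff_posDef.2 hA).spectrum_pos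

lemma exists_pos_le_smul_one [DecidableEq n] (hA : A.IsHermitian) :
    ∃ s : ℝ, 0 < s ∧ A ≤ s • (1 : Matrix n n 𝕜) := by
  cases nonempty_fintype n
  obtain ⟨s, hs⟩ := (finite_real_spectrum (A := A)).bddAbove
  refine ⟨max s 1, by positivity, ?_⟩
  rw [← Algebra.algebraMap_eq_smul_one]
  exact le_algebraMap_of_spectrum_le (fun x hx => (hs hx).trans (le_max_left s 1)) hA

lemma exists_pos_posDef_sub_smul (hA : A.PosDef) (hB : B.IsHermitian) :
    ∃ ε : ℝ, 0 < ε ∧ (A - ε • B).PosDef := by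
  classical
  obtain ⟨r, hr, hrA⟩ := exists_pos_smul_one_le hA
  obtain ⟨s, hs, hBs⟩ := exists_pos_le_smul_one hB
  have hε : 0 < r / (2 * s) := by positivity
  refine ⟨r / (2 * s), hε, posDef_of_posDef_of_le (PosDef.one.smul (half_pos hr)) ?_⟩
  calc (r / 2) • (1 : Matrix n n 𝕜)
      = r • 1 - (r / (2 * s)) • s • 1 := by
        rw [smul_smul, ← sub_smul]
        congr 1
        field_simp
        ring
    _ ≤ A - (r / (2 * s)) • B := by gcongr

lemma exists_isLeast_le_smul (hX : X.PosDef) (hY : 0 < Y) :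
    ∃ c : ℝ, 0 < c ∧ IsLeast {c : ℝ | Y ≤ c • X} c := by
  have hX_nonneg : 0 ≤ X := hX.posSemidef.nonneg
  have hpos : ∀ c ∈ {c : ℝ | Y ≤ c • X}, 0 < c := fun c hc => by
    by_contra! hc_nonpos
    exact (hY.trans_le hc).not_ge (smul_nonpos_of_nonpos_of_nonneg hc_nonpos hX_nonneg)
  have hclosed : IsClosed {c : ℝ | Y ≤ c • X} := isClosed_le continuous_const (by fun_prop)
  have hbdd : BddBelow {c : ℝ | Y ≤ c • X} := ⟨0, fun c hc => (hpos c hc).le⟩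
  obtain ⟨ε, hε, hεX⟩ :=
    exists_pos_posDef_sub_smul hX (nonneg_iff_posSemidef.1 hY.le).isHermitian
  have hmem : Y ≤ ε⁻¹ • X := by
    rw [le_inv_smul_iff_of_pos hε]
    exact sub_nonneg.1 hεX.posSemidef.nonneg
  have hinf := hclosed.csInf_mem ⟨ε⁻¹, hmem⟩ hbdd
  exact ⟨_, hpos _ hinf, hinf, fun c hc => csInf_le hbdd hc⟩

end LoewnerOrder

section Inverse

variable [DecidableEq p] {A B : Matrix p p 𝕜}

lemma posDef_inv_sub_inv (hA : A.PosDef) (hAB : (B - A).PosDef) : (A⁻¹ - B⁻¹).PosDef := by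
  have hB : B.PosDef := by simpa using hA.add hAB
  have hinv : A⁻¹ - B⁻¹ = (A + A * (B - A)⁻¹ * A)⁻¹ := by
    have hfactor : A + A * (B - A)⁻¹ * A = B * (B - A)⁻¹ * A := by
      calc A + A * (B - A)⁻¹ * A
          = (B - A) * (B - A)⁻¹ * A + A * (B - A)⁻¹ * A := by
            rw [mul_nonsing_inv _ ((isUnit_iff_isUnit_det _).1 hAB.isUnit), one_mul]
        _ = B * (B - A)⁻¹ * A := by simp only [sub_mul, sub_add_cancel]
    rw [Matrix.inv_sub_inv (iff_of_true hA.isUnit hB.isUnit), hfactor, Matrix.mul_inv_rev,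
      Matrix.mul_inv_rev, nonsing_inv_nonsing_inv _ ((isUnit_iff_isUnit_det _).1 hAB.isUnit),
      mul_assoc]
  have hcongr : (A * (B - A)⁻¹ * A).PosSemidef := by
    simpa only [hA.isHermitian.eq] using hAB.inv.posSemidef.mul_mul_conjTranspose_same A
  exact hinv ▸ (hA.add_posSemidef hcongr).inv

lemma inv_real_smul {c : ℝ} (hc : c ≠ 0) (hA : IsUnit A) : (c • A)⁻¹ = c⁻¹ • A⁻¹ := by
  apply inv_eq_left_inv
  simp [smul_smul, hc, nonsing_inv_mul A ((isUnit_iff_isUnit_det A).1 hA)]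

lemma continuousAt_inv_of_isUnit (hA : IsUnit A) : ContinuousAt Inv.inv A := by
  refine continuousAt_matrix_inv A ?_
  simpa only [Ring.inverse_eq_inv'] using
    continuousAt_inv₀ ((isUnit_iff_isUnit_det A).1 hA).ne_zero

end Inverse

lemma trace_mul_pos {X A : Matrix p p 𝕜} (hX : 0 < X) (hA : A.PosDef) : 0 < (X * A).trace := by
  classical
  obtain ⟨r, hr, hrA⟩ := exists_pos_smul_one_le hA
  obtain ⟨B, rfl⟩ := CStarAlgebra.nonneg_iff_eq_star_mul_self.1 hX.le
  have htrace : 0 < (star B * B).trace :=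
    (nonneg_iff_posSemidef.1 hX.le).trace_nonneg.lt_of_ne'
      (mt (nonneg_iff_posSemidef.1 hX.le).trace_eq_zero_iff.1 hX.ne')
  calc 0 < r • (star B * B).trace := smul_pos hr htrace
    _ = (B * (r • 1) * star B).trace := by
      rw [mul_smul_comm, smul_mul_assoc, trace_smul, mul_one, trace_mul_comm]
    _ ≤ (B * A * star B).trace :=
      (tracePositiveLinearMap p 𝕜 𝕜).monotone' (star_right_conjugate_le_conjugate hrA B)
    _ = (star B * B * A).trace := by rw [trace_mul_comm, mul_assoc]

/-- A self-map of the nonzero positive semidefinite matrices that is homogeneous of degree one for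
positive real scalars and strongly monotone for the Loewner order: these are the hypotheses of
nonlinear Perron–Frobenius theory. Values outside the cone are irrelevant. -/
structure IsHomogeneousStronglyMonotone (F : Matrix n n 𝕜 → Matrix n n 𝕜) : Prop where
  map_smul : ∀ {c : ℝ} {X : Matrix n n 𝕜}, 0 < c → 0 < X → F (c • X) = c • F X
  posDef_sub : ∀ {X Y : Matrix n n 𝕜}, 0 < X → X < Y → (F Y - F X).PosDef

/-- The upper Collatz–Wielandt set of `F`, whose least element is its Perron eigenvalue. -/
def collatzWielandtSet (F : Matrix n n 𝕜 → Matrix n n 𝕜) : Set ℝ :=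
  {t | ∃ X, 0 < X ∧ F X ≤ t • X}

namespace IsHomogeneousStronglyMonotone

variable {F : Matrix n n 𝕜 → Matrix n n 𝕜} {X Y : Matrix n n 𝕜} {t : ℝ}

omit [Finite n] in
lemma posDef_apply (hF : IsHomogeneousStronglyMonotone F) (hX : 0 < X) : (F X).PosDef := by
  have hlt : X < (2 : ℝ) • X := by simpa [two_smul] using hX
  have hsub := hF.posDef_sub hX hlt
  rwa [hF.map_smul two_pos hX, two_smul, add_sub_cancel_right] at hsub

variable [Nonempty n]

lemma posDef_of_apply_le_smul (hF : IsHomogeneousStronglyMonotone F) (hX : 0 < X)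
    (h : F X ≤ t • X) : 0 < t ∧ X.PosDef := by
  have htX := posDef_of_posDef_of_le (hF.posDef_apply hX) h
  have ht := pos_of_smul_pos_of_pos hX (pos_of_posDef htX)
  exact ⟨ht, by simpa [smul_smul, ht.ne'] using htX.smul (inv_pos.2 ht)⟩

lemma collatzWielandtSet_inter_Iic_eq_image (hF : IsHomogeneousStronglyMonotone F)
    {K : Set (Matrix n n 𝕜)} (hK_pos : K ⊆ Ioi 0)
    (hK_base : ∀ X, 0 < X → ∃ c : ℝ, 0 < c ∧ c • X ∈ K) (s : ℝ) :
    collatzWielandtSet F ∩ Iic s =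
      Prod.snd '' {x ∈ K ×ˢ Icc 0 s | F x.1 ≤ x.2 • x.1} := by
  ext t
  constructor
  · rintro ⟨⟨X, hX, hFX⟩, hts⟩
    obtain ⟨c, hc, hcX⟩ := hK_base X hX
    refine ⟨(c • X, t), ⟨⟨hcX, (hF.posDef_of_apply_le_smul hX hFX).1.le, hts⟩, ?_⟩, rfl⟩
    simpa only [hF.map_smul hc hX, smul_comm t] using smul_le_smul_of_nonneg_left hFX hc.le
  · rintro ⟨⟨X, t⟩, ⟨⟨hX, -, hts⟩, hFX⟩, rfl⟩
    exact ⟨⟨X, hK_pos hX, hFX⟩, hts⟩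

lemma isCompact_collatzWielandtSet_inter_Iic (hF : IsHomogeneousStronglyMonotone F)
    (hcont : ContinuousOn F (Ioi 0)) (s : ℝ) : IsCompact (collatzWielandtSet F ∩ Iic s) := by
  obtain ⟨K, hK, hK_pos, hK_base⟩ := exists_isCompact_base_Ioi (𝕜 := 𝕜) (n := n)
  have hKs : IsCompact (K ×ˢ Icc 0 s) := hK.prod isCompact_Icc
  rw [hF.collatzWielandtSet_inter_Iic_eq_image hK_pos hK_base]
  refine (hKs.of_isClosed_subset ?_ (sep_subset _ _)).image continuous_snd
  exact hKs.isClosed.isClosed_le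
    (hcont.comp continuousOn_fst fun x hx => hK_pos hx.1) (by fun_prop)

lemma exists_isLeast_collatzWielandtSet (hF : IsHomogeneousStronglyMonotone F)
    (hcont : ContinuousOn F (Ioi 0)) : ∃ t, IsLeast (collatzWielandtSet F) t := by
  classical
  have hone : (0 : Matrix n n 𝕜) < 1 := pos_of_posDef PosDef.one
  obtain ⟨s, -, hs⟩ := exists_pos_le_smul_one (hF.posDef_apply hone).isHermitian
  obtain ⟨t, ⟨ht, hts⟩, hmin⟩ := (hF.isCompact_collatzWielandtSet_inter_Iic hcont s).exists_isLeast
    ⟨s, ⟨1, hone, hs⟩, self_mem_Iic⟩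
  exact ⟨t, ht, fun u hu => (le_total u s).elim (fun hus => hmin ⟨hu, hus⟩) hts.trans⟩

lemma apply_eq_smul_of_isLeast (hF : IsHomogeneousStronglyMonotone F)
    (ht : IsLeast (collatzWielandtSet F) t) (hX : 0 < X) (h : F X ≤ t • X) : F X = t • X := by
  by_contra hne
  have hFX := pos_of_posDef (hF.posDef_apply hX)
  have hgap := hF.posDef_sub hFX (h.lt_of_ne hne)
  rw [hF.map_smul (hF.posDef_of_apply_le_smul hX h).1 hX] at hgap
  obtain ⟨ε, hε, hgap_ε⟩ := exists_pos_posDef_sub_smul hgap (hF.posDef_apply hX).isHermitian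
  have hmem : t - ε ∈ collatzWielandtSet F := by
    refine ⟨F X, hFX, sub_nonneg.1 ?_⟩
    rw [sub_smul, sub_right_comm]
    exact hgap_ε.posSemidef.nonneg
  linarith [ht.2 hmem]

theorem exists_posDef_apply_eq_smul (hF : IsHomogeneousStronglyMonotone F)
    (hcont : ContinuousOn F (Ioi 0)) :
    ∃ X : Matrix n n 𝕜, ∃ t : ℝ, X.PosDef ∧ 0 < t ∧ F X = t • X := by
  obtain ⟨t, ht⟩ := hF.exists_isLeast_collatzWielandtSet hcont
  obtain ⟨X, hX, h⟩ := ht.1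
  obtain ⟨htpos, hXpd⟩ := hF.posDef_of_apply_le_smul hX h
  exact ⟨X, t, hXpd, htpos, hF.apply_eq_smul_of_isLeast ht hX h⟩

omit [Nonempty n] in
theorem exists_eq_smul_of_apply_le_of_le_apply (hF : IsHomogeneousStronglyMonotone F)
    (hX : 0 < X) (hY : 0 < Y) (hFX : F X ≤ X) (hFY : Y ≤ F Y) :
    ∃ c : ℝ, 0 < c ∧ Y = c • X := by
  have hXpd := posDef_of_posDef_of_le (hF.posDef_apply hX) hFX
  obtain ⟨c, hc, hYc, hmin⟩ := exists_isLeast_le_smul hXpd hY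
  refine ⟨c, hc, by_contra fun hne => ?_⟩
  have hgap := hF.posDef_sub hY (lt_of_le_of_ne hYc hne)
  rw [hF.map_smul hc hX] at hgap
  obtain ⟨ε, hε, hgap_ε⟩ := exists_pos_posDef_sub_smul hgap hXpd.isHermitian
  have hmem : Y ≤ (c - ε) • X := by
    calc Y ≤ F Y := hFY
      _ ≤ c • F X - ε • X := by
        rw [← sub_nonneg, sub_right_comm]; exact hgap_ε.posSemidef.nonneg
      _ ≤ c • X - ε • X := by gcongr
      _ = (c - ε) • X := (sub_smul c ε X).symm
  linarith [hmin hmem]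

end IsHomogeneousStronglyMonotone

/-- A linear map between matrix algebras sending every nonzero positive semidefinite matrix to a
positive definite one. In the Loewner order `0 < X` means that `X` is positive semidefinite and
nonzero, not that it is positive definite. -/
def PositivityImproving (Φ : Matrix p p 𝕜 →ₗ[𝕜] Matrix q q 𝕜) : Prop :=
  ∀ ⦃X : Matrix p p 𝕜⦄, 0 < X → (Φ X).PosDef

/-- `Φ` and `Ψ` are adjoint for the bilinear trace pairing `(X, W) ↦ tr (X W)`, which on Hermitian
matrices is the Hilbert–Schmidt inner product. -/
def IsTraceAdjoint (Φ : Matrix p p 𝕜 →ₗ[𝕜] Matrix q q 𝕜) (Ψ : Matrix q q 𝕜 →ₗ[𝕜] Matrix p p 𝕜) :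
    Prop :=
  ∀ X W, (X * Ψ W).trace = (Φ X * W).trace

omit [Fintype p] [Fintype q] in
lemma positivityImproving_iff {Φ : Matrix p p 𝕜 →ₗ[𝕜] Matrix q q 𝕜} : PositivityImproving Φ ↔
    ∀ X : Matrix p p 𝕜, X.PosSemidef → X ≠ 0 → (Φ X).PosDef :=
  ⟨fun h _ hX hne => h (hX.nonneg.lt_of_ne' hne),
    fun h X hX => h X (nonneg_iff_posSemidef.1 hX.le) hX.ne'⟩

lemma PositivityImproving.of_isTraceAdjoint
    {Φ : Matrix p p 𝕜 →ₗ[𝕜] Matrix q q 𝕜} {Ψ : Matrix q q 𝕜 →ₗ[𝕜] Matrix p p 𝕜}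
    (hΦ : ∀ X, X.IsHermitian → (Φ X).IsHermitian) (hadj : IsTraceAdjoint Φ Ψ)
    (hΨ : PositivityImproving Ψ) : PositivityImproving Φ := by
  intro X hX
  refine PosDef.of_dotProduct_mulVec_pos (hΦ X (nonneg_iff_posSemidef.1 hX.le).isHermitian)
    fun v hv => ?_
  have hvv : 0 < vecMulVec v (star v) :=
    (posSemidef_vecMulVec_self_star v).nonneg.lt_of_ne' (by simpa [vecMulVec_eq_zero] using hv)
  calc 0 < (X * Ψ (vecMulVec v (star v))).trace := trace_mul_pos hX (hΨ hvv)
    _ = star v ⬝ᵥ Φ X *ᵥ v := by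
      rw [hadj, mul_vecMulVec, trace_vecMulVec, dotProduct_comm]

section SinkhornMap

variable [DecidableEq p] [DecidableEq q]
  {Φ : Matrix p p 𝕜 →ₗ[𝕜] Matrix q q 𝕜} {Ψ : Matrix q q 𝕜 →ₗ[𝕜] Matrix p p 𝕜}
  {X : Matrix p p 𝕜}

/-- One round of Sinkhorn scaling on `φ_T`: apply `Φ`, invert, apply `Ψ`, invert. -/
noncomputable def sinkhornMap (Φ : Matrix p p 𝕜 →ₗ[𝕜] Matrix q q 𝕜)
    (Ψ : Matrix q q 𝕜 →ₗ[𝕜] Matrix p p 𝕜) (X : Matrix p p 𝕜) : Matrix p p 𝕜 :=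
  (Ψ (Φ X)⁻¹)⁻¹

lemma sinkhornMap_eq_iff {Y : Matrix p p 𝕜} (hY : Y.PosDef) :
    sinkhornMap Φ Ψ X = Y ↔ Ψ (Φ X)⁻¹ = Y⁻¹ := by
  have hdet : IsUnit Y.det := (isUnit_iff_isUnit_det Y).1 hY.isUnit
  constructor
  · rintro rfl
    exact (nonsing_inv_nonsing_inv _ (isUnit_nonsing_inv_det_iff.1 hdet)).symm
  · intro h
    rw [sinkhornMap, h, nonsing_inv_nonsing_inv _ hdet]

lemma sinkhornMap_eigenvalue (hadj : IsTraceAdjoint Φ Ψ) (hX : X.PosDef)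
    (hΦX : IsUnit (Φ X)) {t : ℝ} (ht : 0 < t) (h : sinkhornMap Φ Ψ X = t • X) :
    (Fintype.card p : ℝ) = t * Fintype.card q := by
  have hΨ : Ψ (Φ X)⁻¹ = t⁻¹ • X⁻¹ := by
    rw [(sinkhornMap_eq_iff (hX.smul ht)).1 h, inv_real_smul ht.ne' hX.isUnit]
  have htrace : t⁻¹ • (Fintype.card p : 𝕜) = Fintype.card q := by
    calc t⁻¹ • (Fintype.card p : 𝕜) = (X * Ψ (Φ X)⁻¹).trace := by
          rw [hΨ, mul_smul_comm, mul_nonsing_inv X ((isUnit_iff_isUnit_det X).1 hX.isUnit),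
            trace_smul, trace_one]
      _ = Fintype.card q := by
          rw [hadj, mul_nonsing_inv _ ((isUnit_iff_isUnit_det _).1 hΦX), trace_one]
  rw [inv_smul_eq_iff₀ ht.ne', RCLike.real_smul_eq_coe_mul] at htrace
  exact_mod_cast htrace

variable [Nonempty q]

omit [Fintype p] [DecidableEq p] in
lemma posDef_apply_inv_apply (hΦ : PositivityImproving Φ) (hΨ : PositivityImproving Ψ)
    (hX : 0 < X) : (Ψ (Φ X)⁻¹).PosDef :=
  hΨ (pos_of_posDef (hΦ hX).inv)

lemma isHomogeneousStronglyMonotone_sinkhornMap (hΦ : PositivityImproving Φ)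
    (hΨ : PositivityImproving Ψ) : IsHomogeneousStronglyMonotone (sinkhornMap Φ Ψ) where
  map_smul {c X} hc hX := by
    simp only [sinkhornMap, LinearMap.map_smul_of_tower]
    rw [inv_real_smul hc.ne' (hΦ hX).isUnit, LinearMap.map_smul_of_tower,
      inv_real_smul (inv_ne_zero hc.ne') (posDef_apply_inv_apply hΦ hΨ hX).isUnit, inv_inv]
  posDef_sub {X Y} hX hXY := by
    have hΦ_lt : (Φ Y - Φ X).PosDef := map_sub Φ Y X ▸ hΦ (sub_pos.2 hXY)
    have hinv_lt : 0 < (Φ X)⁻¹ - (Φ Y)⁻¹ := pos_of_posDef (posDef_inv_sub_inv (hΦ hX) hΦ_lt)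
    have hΨ_lt : (Ψ (Φ X)⁻¹ - Ψ (Φ Y)⁻¹).PosDef := map_sub Ψ _ _ ▸ hΨ hinv_lt
    exact posDef_inv_sub_inv (posDef_apply_inv_apply hΦ hΨ (hX.trans hXY)) hΨ_lt

lemma continuousOn_sinkhornMap (hΦ : PositivityImproving Φ) (hΨ : PositivityImproving Ψ) :
    ContinuousOn (sinkhornMap Φ Ψ) (Ioi 0) := fun X hX => by
  have hΦ_inv : ContinuousAt (fun X => (Φ X)⁻¹) X :=
    (continuousAt_inv_of_isUnit (hΦ hX).isUnit).comp (f := Φ)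
      (LinearMap.continuous_of_finiteDimensional Φ).continuousAt
  have hΨ_inv : ContinuousAt (fun X => Ψ (Φ X)⁻¹) X :=
    ContinuousAt.comp (g := Ψ) (LinearMap.continuous_of_finiteDimensional Ψ).continuousAt hΦ_inv
  exact ((continuousAt_inv_of_isUnit (posDef_apply_inv_apply hΦ hΨ hX).isUnit).comp
    (f := fun X => Ψ (Φ X)⁻¹) hΨ_inv).continuousWithinAt

lemma exists_eq_smul_of_sinkhornMap_eq_self [Nonempty p] (hΦ : PositivityImproving Φ)
    (hΨ : PositivityImproving Ψ) {Y : Matrix p p 𝕜} (hX : X.PosDef) (hY : Y.PosDef)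
    (hFX : sinkhornMap Φ Ψ X = X) (hFY : sinkhornMap Φ Ψ Y = Y) :
    ∃ c : ℝ, 0 < c ∧ Y = c • X :=
  (isHomogeneousStronglyMonotone_sinkhornMap hΦ hΨ).exists_eq_smul_of_apply_le_of_le_apply
    (pos_of_posDef hX) (pos_of_posDef hY) hFX.le hFY.ge

end SinkhornMap

lemma exists_posDef_sinkhornMap_eq_self [DecidableEq p] [Nonempty p]
    {Φ Ψ : Matrix p p 𝕜 →ₗ[𝕜] Matrix p p 𝕜} (hΦ : PositivityImproving Φ)
    (hΨ : PositivityImproving Ψ) (hadj : IsTraceAdjoint Φ Ψ) :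
    ∃ X : Matrix p p 𝕜, X.PosDef ∧ sinkhornMap Φ Ψ X = X := by
  obtain ⟨X, t, hX, ht, hFX⟩ := (isHomogeneousStronglyMonotone_sinkhornMap hΦ hΨ)
    |>.exists_posDef_apply_eq_smul (continuousOn_sinkhornMap hΦ hΨ)
  have hcard := sinkhornMap_eigenvalue hadj hX (hΦ (pos_of_posDef hX)).isUnit ht hFX
  have ht_one : t = 1 := by simpa using hcard
  exact ⟨X, hX, by rw [hFX, ht_one, one_smul]⟩

section KrausMap

/-- The completely positive map with Kraus operators `E i`. No normalization is imposed, so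
that the adjoint, with Kraus operators `(E i)ᴴ`, is a map of the same kind. -/
def krausMap (E : ι → Matrix p q 𝕜) : Matrix q q 𝕜 →ₗ[𝕜] Matrix p p 𝕜 where
  toFun X := ∑ i, E i * X * (E i)ᴴ
  map_add' X Y := by simp only [Matrix.mul_add, Matrix.add_mul, Finset.sum_add_distrib]
  map_smul' c X := by
    simp only [Matrix.mul_smul, Matrix.smul_mul, Finset.smul_sum, RingHom.id_apply]

variable (E : ι → Matrix p q 𝕜)

omit [Fintype p] in
lemma isHermitian_krausMap_apply {X : Matrix q q 𝕜} (hX : X.IsHermitian) :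
    (krausMap E X).IsHermitian :=
  isSelfAdjoint_sum _ fun i _ => isHermitian_mul_mul_conjTranspose (E i) hX

lemma isTraceAdjoint_krausMap : IsTraceAdjoint (krausMap fun i => (E i)ᴴ) (krausMap E) := by
  intro X W
  simp only [krausMap, LinearMap.coe_mk, AddHom.coe_mk, conjTranspose_conjTranspose,
    Matrix.mul_sum, Matrix.sum_mul, trace_sum]
  refine Finset.sum_congr rfl fun i _ => ?_
  calc (X * (E i * W * (E i)ᴴ)).trace = (X * (E i * W) * (E i)ᴴ).trace := by
        simp only [Matrix.mul_assoc]
    _ = ((E i)ᴴ * X * E i * W).trace := by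
        rw [trace_mul_comm]
        simp only [Matrix.mul_assoc]

end KrausMap

end QuantumSinkhorn

open QuantumSinkhorn in
theorem quantum_sinkhorn_exists_unique_general {𝕜 n : Type*} [RCLike 𝕜] [Fintype n]
    [DecidableEq n] {Φ Ψ : Matrix n n 𝕜 →ₗ[𝕜] Matrix n n 𝕜}
    (hherm : ∀ X, X.IsHermitian → (Φ X).IsHermitian) (hadj : IsTraceAdjoint Φ Ψ)
    (hΨ : PositivityImproving Ψ) :
    ∃ f0 fT : Matrix n n 𝕜, f0.PosDef ∧ fT.PosDef ∧ Φ fT = f0 ∧ Ψ f0⁻¹ = fT⁻¹ ∧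
      ∀ g0 gT : Matrix n n 𝕜, g0.PosDef → gT.PosDef → Φ gT = g0 → Ψ g0⁻¹ = gT⁻¹ →
        ∃ c : ℝ, 0 < c ∧ g0 = c • f0 ∧ gT = c • fT := by
  cases isEmpty_or_nonempty n
  · exact ⟨1, 1, .one, .one, Subsingleton.elim _ _, Subsingleton.elim _ _,
      fun _ _ _ _ _ _ => ⟨1, one_pos, Subsingleton.elim _ _, Subsingleton.elim _ _⟩⟩
  have hΦ : PositivityImproving Φ := .of_isTraceAdjoint hherm hadj hΨ
  obtain ⟨X, hX, hFX⟩ := exists_posDef_sinkhornMap_eq_self hΦ hΨ hadj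
  refine ⟨Φ X, X, hΦ (pos_of_posDef hX), hX, rfl, (sinkhornMap_eq_iff hX).1 hFX, ?_⟩
  rintro _ Y - hY rfl hΨY
  have hFY : sinkhornMap Φ Ψ Y = Y := (sinkhornMap_eq_iff hY).2 hΨY
  obtain ⟨c, hc, rfl⟩ := exists_eq_smul_of_sinkhornMap_eq_self hΦ hΨ hX hY hFX hFY
  exact ⟨c, hc, Φ.map_smul_of_tower c X, rfl⟩

/-- (Quantum Sinkhorn, Theorem on doubly stochastic Kraus maps.) For a positivity-improving
Kraus map `E†(ρ) = Σ_i E_i ρ E_i†` with adjoint `E(X) = Σ_i E_i† X E_i`, there exist Hermitian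
positive definite matrices `φ_0`, `φ_T` with `E(φ_T) = φ_0` and `E†(φ_0⁻¹) = φ_T⁻¹`, unique up
to multiplication of both by a common positive constant. -/
theorem quantum_sinkhorn_exists_unique {n m : ℕ}
    (E : Fin m → Matrix (Fin n) (Fin n) ℂ)
    (hsum : ∑ i, (E i)ᴴ * E i = 1)
    (himp : ∀ ρ : Matrix (Fin n) (Fin n) ℂ, ρ.PosSemidef → ρ ≠ 0 →
      (∑ i, E i * ρ * (E i)ᴴ).PosDef) :
    ∃ f0 fT : Matrix (Fin n) (Fin n) ℂ, f0.PosDef ∧ fT.PosDef ∧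
      (∑ i, (E i)ᴴ * fT * E i) = f0 ∧
      (∑ i, E i * f0⁻¹ * (E i)ᴴ) = fT⁻¹ ∧
      ∀ g0 gT : Matrix (Fin n) (Fin n) ℂ, g0.PosDef → gT.PosDef →
        (∑ i, (E i)ᴴ * gT * E i) = g0 →
        (∑ i, E i * g0⁻¹ * (E i)ᴴ) = gT⁻¹ →
        ∃ c : ℝ, 0 < c ∧ g0 = (c : ℂ) • f0 ∧ gT = (c : ℂ) • fT := by
  simpa [QuantumSinkhorn.krausMap] using quantum_sinkhorn_exists_unique_general
    (fun _ => QuantumSinkhorn.isHermitian_krausMap_apply fun i => (E i)ᴴ)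
    (QuantumSinkhorn.isTraceAdjoint_krausMap E) (QuantumSinkhorn.positivityImproving_iff.2 himp)
end

section
/- Let E_1,…,E_m be n×n complex matrices with Σ_{i=1}^m E_i† E_i = I, let E†(ρ) = Σ_{i=1}^m E_i ρ E_i† be the associated Kraus map with adjoint E(X) = Σ_{i=1}^m E_i† X E_i. Let φ_0 and φ_T be Hermitian positive definite n×n matrices satisfying E(φ_T) = φ_0 and E†(φ_0^{-1}) = φ_T^{-1}, and let χ_0, χ_T be any invertible n×n matrices with φ_0 = χ_0† χ_0 and φ_T = χ_T† χ_T. Then the map F†(ρ) := χ_T E†(χ_0^{-1} ρ χ_0^{-†}) χ_T† is a doubly stochastic Kraus map: F†(I) = I and its adjoint F(X) := χ_0^{-†} E(χ_T† X χ_T) χ_0^{-1} satisfies F(I) = I. -/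
open Matrix
open scoped ComplexOrder

section

variable {R p q ι : Type*} [CommRing R] [Fintype p] [DecidableEq p] [Fintype q] [DecidableEq q]
  [Fintype ι]

theorem mul_nonsing_inv_mul_mul_eq_one {A B : Matrix p p R}
    (hA : IsUnit A.det) (hB : IsUnit B.det) :
    A * (B * A)⁻¹ * B = 1 := by
  rw [Matrix.mul_inv_rev, mul_nonsing_inv_cancel_left A _ hA, nonsing_inv_mul B hB]

theorem nonsing_inv_mul_mul_mul_nonsing_inv_eq_one {A B : Matrix p p R}
    (hA : IsUnit A.det) (hB : IsUnit B.det) :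
    B⁻¹ * (B * A) * A⁻¹ = 1 := by
  rw [nonsing_inv_mul_cancel_left B _ hB, mul_nonsing_inv A hA]

theorem doubly_stochastic_kraus_map_general [StarRing R] (E : ι → Matrix q p R)
    (f0 : Matrix p p R) (fT : Matrix q q R)
    (hE1 : ∑ i, (E i)ᴴ * fT * E i = f0)
    (hE2 : ∑ i, E i * f0⁻¹ * (E i)ᴴ = fT⁻¹)
    (χ0 : Matrix p p R) (χT : Matrix q q R)
    (hχ0 : IsUnit χ0.det) (hχT : IsUnit χT.det)
    (hfac0 : f0 = χ0ᴴ * χ0) (hfacT : fT = χTᴴ * χT) :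
    χT * (∑ i, E i * (χ0⁻¹ * (1 : Matrix p p R) * (χ0ᴴ)⁻¹) * (E i)ᴴ) * χTᴴ = 1 ∧
    (χ0ᴴ)⁻¹ * (∑ i, (E i)ᴴ * (χTᴴ * (1 : Matrix q q R) * χT) * E i) * χ0⁻¹ = 1 := by
  have inv_f0 : χ0⁻¹ * 1 * (χ0ᴴ)⁻¹ = f0⁻¹ := by rw [mul_one, hfac0, Matrix.mul_inv_rev]
  have self_fT : χTᴴ * 1 * χT = fT := by rw [mul_one, hfacT]
  constructor
  · have hχT_star : IsUnit χTᴴ.det := χT.det_conjTranspose ▸ hχT.star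
    calc
      _ = χT * fT⁻¹ * χTᴴ := by rw [inv_f0, hE2]
      _ = χT * (χTᴴ * χT)⁻¹ * χTᴴ := by rw [hfacT]
      _ = 1 := mul_nonsing_inv_mul_mul_eq_one hχT hχT_star
  · have hχ0_star : IsUnit χ0ᴴ.det := χ0.det_conjTranspose ▸ hχ0.star
    calc
      _ = (χ0ᴴ)⁻¹ * f0 * χ0⁻¹ := by rw [self_fT, hE1]
      _ = (χ0ᴴ)⁻¹ * (χ0ᴴ * χ0) * χ0⁻¹ := by rw [hfac0]
      _ = 1 := nonsing_inv_mul_mul_mul_nonsing_inv_eq_one hχ0 hχ0_star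

end

/-- If `φ_0`, `φ_T` are Hermitian positive definite with `E(φ_T) = φ_0` and
`E†(φ_0⁻¹) = φ_T⁻¹`, and `χ_0`, `χ_T` are invertible with `φ_0 = χ_0† χ_0`, `φ_T = χ_T† χ_T`,
then `F†(ρ) = χ_T E†(χ_0⁻¹ ρ χ_0^{-†}) χ_T†` is a doubly stochastic Kraus map:
`F†(I) = I` and its adjoint `F(X) = χ_0^{-†} E(χ_T† X χ_T) χ_0⁻¹` satisfies `F(I) = I`. -/
theorem doubly_stochastic_kraus_map {n m : ℕ}
    (E : Fin m → Matrix (Fin n) (Fin n) ℂ)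
    (hsum : ∑ i, (E i)ᴴ * E i = 1)
    (f0 fT : Matrix (Fin n) (Fin n) ℂ) (hf0 : f0.PosDef) (hfT : fT.PosDef)
    (hE1 : ∑ i, (E i)ᴴ * fT * E i = f0)
    (hE2 : ∑ i, E i * f0⁻¹ * (E i)ᴴ = fT⁻¹)
    (χ0 χT : Matrix (Fin n) (Fin n) ℂ)
    (hχ0 : IsUnit χ0.det) (hχT : IsUnit χT.det)
    (hfac0 : f0 = χ0ᴴ * χ0) (hfacT : fT = χTᴴ * χT) :
    χT * (∑ i, E i * (χ0⁻¹ * (1 : Matrix (Fin n) (Fin n) ℂ) * (χ0ᴴ)⁻¹) * (E i)ᴴ) * χTᴴ = 1 ∧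
    (χ0ᴴ)⁻¹ * (∑ i, (E i)ᴴ * (χTᴴ * (1 : Matrix (Fin n) (Fin n) ℂ) * χT) * E i) * χ0⁻¹ = 1 :=
  doubly_stochastic_kraus_map_general E f0 fT hE1 hE2 χ0 χT hχ0 hχT hfac0 hfacT
end
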